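/- Let x be a point of ℝP³. Then the complement ℝP³ \ {x} (with the subspace topology) is homotopy equivalent to the real projective plane ℝP². In fact, for any 3-dimensional linear subspace W of EuclideanSpace ℝ (Fin 4) whose projectivization H does not contain x, the subspace H is a deformation retract of ℝP³ \ {x}, via the projection from x. -/

import Mathlib

/-!
Choose a linear complement `W` of the line `x`. The linear projection `p` of `V` onto `W` along `x`
vanishes on no vector outside `x`, so it induces the projection of `ℙ V \ {x}` onto `ℙ W` from `x`.
Writing `i` for the inclusion of `W`, every linear map `(1 - t) • id + t • i ∘ p` has the same
composite with `p` as `id` has, hence is nonzero wherever `p` is. These maps therefore descend to a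
homotopy of `ℙ V \ {x}` from the identity to the projection, and the homotopy fixes `ℙ W` because
each of them restricts to the identity on `W`.
-/

/-- The quotient topology on the projectivization, induced from the nonzero vectors. -/
instance projectivizationTopology {K V : Type*} [DivisionRing K] [AddCommGroup V]
    [Module K V] [TopologicalSpace V] : TopologicalSpace (Projectivization K V) :=
  instTopologicalSpaceQuotient

open Function Module Set Topology
open scoped ContinuousMap LinearAlgebra.Projectivization unitInterval

section StrongDeformationRetract

variable {X Y : Type*} [TopologicalSpace X] [TopologicalSpace Y]

/-- A subset `A` of a space `X` is a strong deformation retract of `X` if some retraction of `X`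
onto `A` is homotopic to the identity through maps that fix `A` pointwise. -/
def IsStrongDeformationRetract (A : Set X) : Prop :=
  ∃ r : C(X, X), (∀ x, r x ∈ A) ∧ (∀ x, x ∈ A → r x = x) ∧
    (ContinuousMap.id X).HomotopicRel r A

theorem isStrongDeformationRetract_range {f : C(X, Y)} {g : C(Y, X)}
    (hgf : (ContinuousMap.id X).HomotopicRel (g.comp f) (range g)) :
    IsStrongDeformationRetract (range g) :=
  ⟨g.comp f, fun x => mem_range_self (f x), fun _ hx => (hgf.fst_eq_snd hx).symm, hgf⟩

theorem nonempty_homotopyEquiv_of_leftInverse {f : C(X, Y)} {g : C(Y, X)} (hfg : LeftInverse f g)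
    (hgf : (ContinuousMap.id X).Homotopic (g.comp f)) : Nonempty (X ≃ₕ Y) :=
  ⟨⟨f, g, hgf.symm, (ContinuousMap.ext hfg : f.comp g = .id Y) ▸ .refl _⟩⟩

end StrongDeformationRetract

section ProjectiveMap

variable {K V W : Type*} [DivisionRing K] [AddCommGroup V] [Module K V] [AddCommGroup W]
  [Module K W]

theorem coe_projectivization_eq_setOf_mk (N : Submodule K V) :
    (N.projectivization : Set (ℙ K V)) = {z | ∃ (v : V) (hv : v ≠ 0), v ∈ N ∧ .mk K v hv = z} := by
  ext z
  induction z with | h v hv =>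
  refine ⟨fun hvN => ⟨v, hv, hvN, rfl⟩, ?_⟩
  rintro ⟨w, hw, hwN, hwv⟩
  exact hwv ▸ hwN

theorem coe_projectivization_submodule (x : ℙ K V) :
    (x.submodule.projectivization : Set (ℙ K V)) = {x} := by
  ext z
  induction z with | h v hv =>
  induction x with | h w hw =>
  simp [Submodule.mem_span_singleton, Projectivization.mk_eq_mk_iff']

theorem range_projectivization_map {L : V →ₗ[K] W} (hL : Injective L) :
    range (Projectivization.map L hL) = (L.range.projectivization : Set (ℙ K W)) := by
  rw [coe_projectivization_eq_setOf_mk]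
  ext z
  constructor
  · rintro ⟨y, rfl⟩
    induction y with | h v hv =>
    exact ⟨L v, _, L.mem_range_self v, (Projectivization.map_mk L hL v hv).symm⟩
  · rintro ⟨_, hLv, ⟨v, rfl⟩, rfl⟩
    exact ⟨.mk K v (ne_zero_of_map hLv), Projectivization.map_mk L hL v _⟩

/-- The points of `ℙ K V` at which the linear map `L` induces a map to `ℙ K W`: the complement of
the projectivization of the kernel of `L`. -/
def projectiveDomain (L : V →ₗ[K] W) : Set (ℙ K V) :=
  (L.ker.projectivization : Set (ℙ K V))ᶜ

theorem projectiveDomain_of_ker_eq {L : V →ₗ[K] W} {N : Submodule K V} (hN : L.ker = N) :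
    projectiveDomain L = (N.projectivization : Set (ℙ K V))ᶜ :=
  hN ▸ rfl

theorem mk_mem_projectiveDomain {L : V →ₗ[K] W} {v : V} (hv : v ≠ 0) :
    .mk K v hv ∈ projectiveDomain L ↔ L v ≠ 0 :=
  Iff.rfl

theorem apply_rep_ne_zero {L : V →ₗ[K] W} {z : ℙ K V} (hz : z ∈ projectiveDomain L) :
    L z.rep ≠ 0 := by
  rwa [← mk_mem_projectiveDomain z.rep_nonzero, z.mk_rep]

/-- The map `[v] ↦ [L v]` of projective spaces induced by a linear map `L`, which need not be
injective (unlike in `Projectivization.map`), defined where it makes sense. -/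
noncomputable def projectiveMap (L : V →ₗ[K] W) (z : projectiveDomain L) : ℙ K W :=
  .mk K (L z.1.rep) (apply_rep_ne_zero z.2)

theorem projectiveMap_mk (L : V →ₗ[K] W) {v : V} (hv : v ≠ 0) (hLv : L v ≠ 0) :
    projectiveMap L ⟨.mk K v hv, hLv⟩ = .mk K (L v) hLv := by
  obtain ⟨a, ha⟩ := Projectivization.exists_smul_eq_mk_rep K v hv
  refine (Projectivization.mk_eq_mk_iff K _ _ _ _).2 ⟨a, ?_⟩
  rw [← ha, Units.smul_def, Units.smul_def, map_smul]

theorem projectivization_map_mem_projectiveDomain {p : V →ₗ[K] W} {i : W →ₗ[K] V}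
    (h : LeftInverse p i) (z : ℙ K W) :
    Projectivization.map i h.injective z ∈ projectiveDomain p := by
  induction z with | h w hw =>
  exact (h w).trans_ne hw

variable [TopologicalSpace V] [TopologicalSpace W]

theorem continuous_projectivization_mk' :
    Continuous (Projectivization.mk' K : {v : V // v ≠ 0} → ℙ K V) :=
  continuous_quotient_mk'

theorem isOpenQuotientMap_projectivization_mk' [ContinuousConstSMul K V] :
    IsOpenQuotientMap (Projectivization.mk' K : {v : V // v ≠ 0} → ℙ K V) := by
  refine ⟨Quotient.mk''_surjective, continuous_projectivization_mk', fun s hs => ?_⟩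
  have saturation : Projectivization.mk' K ⁻¹' (Projectivization.mk' K '' s) =
      ⋃ a : Kˣ, (fun v : {v : V // v ≠ 0} => a • v) ⁻¹' s := by
    ext v
    simp only [mem_preimage, mem_image, mem_iUnion]
    constructor
    · rintro ⟨w, hw, hwv⟩
      obtain ⟨a, ha⟩ := (Projectivization.mk_eq_mk_iff K _ _ w.2 v.2).1 hwv
      exact ⟨a, (Subtype.ext ha : a • v = w) ▸ hw⟩
    · rintro ⟨a, ha⟩
      exact ⟨a • v, ha, (Projectivization.mk_eq_mk_iff K _ _ _ v.2).2 ⟨a, rfl⟩⟩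
  have continuous_smul_unit (a : Kˣ) : Continuous fun v : {v : V // v ≠ 0} => a • v :=
    (continuous_subtype_val.const_smul (a : K)).subtype_mk _
  have hquot : IsQuotientMap (Projectivization.mk' K : {v : V // v ≠ 0} → ℙ K V) :=
    isQuotientMap_quotient_mk'
  rw [← hquot.isOpen_preimage, saturation]
  exact isOpen_iUnion fun a => hs.preimage (continuous_smul_unit a)

theorem continuous_projectivization_map {L : V →ₗ[K] W} (hL : Continuous L) (hinj : Injective L) :
    Continuous (Projectivization.map L hinj) :=
  Continuous.quotient_map' ((hL.comp continuous_subtype_val).subtype_mk _) _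

-- Taking the product with `T` preserves the quotient map `V \ {0} → ℙ K V` because it is open.
theorem continuous_projectiveMap_family [ContinuousConstSMul K V] {T : Type*} [TopologicalSpace T]
    {L : T → V →ₗ[K] W} (hL : Continuous fun q : T × V => L q.1 q.2) :
    Continuous fun q : {q : T × ℙ K V | q.2 ∈ projectiveDomain (L q.1)} =>
      projectiveMap (L q.1.1) ⟨q.1.2, q.2⟩ := by
  have hquot := ((IsOpenQuotientMap.id (X := T)).prodMap
    (isOpenQuotientMap_projectivization_mk' (K := K) (V := V))).restrictPreimage
      {q : T × ℙ K V | q.2 ∈ projectiveDomain (L q.1)}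
  rw [← hquot.continuous_comp_iff]
  have hlift : Continuous fun q : Prod.map id (Projectivization.mk' K) ⁻¹'
      {q : T × ℙ K V | q.2 ∈ projectiveDomain (L q.1)} =>
        Projectivization.mk' K ⟨L q.1.1 q.1.2.1, q.2⟩ :=
    continuous_projectivization_mk'.comp ((hL.comp ((continuous_id.prodMap
      continuous_subtype_val).comp continuous_subtype_val)).subtype_mk _)
  exact hlift.congr fun q => (projectiveMap_mk (L q.1.1) q.1.2.2 q.2).symm

theorem continuous_projectiveMap [ContinuousConstSMul K V] {L : V →ₗ[K] W} (hL : Continuous L) :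
    Continuous (projectiveMap L) :=
  (continuous_projectiveMap_family (T := Unit) (L := fun _ => L) (hL.comp continuous_snd)).comp
    ((Continuous.prodMk_right ()).comp continuous_subtype_val |>.subtype_mk fun z => z.2)

end ProjectiveMap

section LinearProjection

variable {K V E : Type*} [DivisionRing K] [AddCommGroup V] [Module K V] [TopologicalSpace V]
  [AddCommGroup E] [Module K E] [TopologicalSpace E]

/-- The map `[v] ↦ [p v]` as a continuous map; for `p` surjective this is the projection to `ℙ K E`
with centre the projectivization of the kernel of `p`. -/
noncomputable def projectionFromKer [ContinuousConstSMul K V] (p : V →L[K] E) :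
    C(projectiveDomain p.toLinearMap, ℙ K E) :=
  ⟨projectiveMap p.toLinearMap, continuous_projectiveMap p.continuous⟩

/-- The map `[e] ↦ [i e]` induced by a linear section `i` of `p`, as a continuous map to the
domain of `projectionFromKer p`. -/
def projectiveSection {p : V →L[K] E} {i : E →L[K] V} (h : LeftInverse p i) :
    C(ℙ K E, projectiveDomain p.toLinearMap) where
  toFun z := ⟨.map i.toLinearMap h.injective z, projectivization_map_mem_projectiveDomain h z⟩
  continuous_toFun := (continuous_projectivization_map i.continuous h.injective).subtype_mk _

theorem leftInverse_projectionFromKer [ContinuousConstSMul K V] {p : V →L[K] E} {i : E →L[K] V}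
    (h : LeftInverse p i) : LeftInverse (projectionFromKer p) (projectiveSection h) := by
  intro z
  induction z with | h e he =>
  refine (projectiveMap_mk p.toLinearMap _ _).trans ?_
  congr 1
  exact h e

theorem range_projectiveSection {p : V →L[K] E} {i : E →L[K] V} (h : LeftInverse p i) :
    range (projectiveSection h) = Subtype.val ⁻¹' (i.range.projectivization : Set (ℙ K V)) := by
  rw [← range_projectivization_map h.injective]
  ext z
  simp only [mem_range, mem_preimage, Subtype.ext_iff]
  rfl

end LinearProjection

section Homotopy

variable {V E : Type*} [AddCommGroup V] [Module ℝ V] [TopologicalSpace V] [AddCommGroup E]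
  [Module ℝ E] [TopologicalSpace E]

/-- The linear interpolation between the identity of `V` at `t = 0` and `i ∘ p` at `t = 1`, from
which `projectionHomotopy` is induced. -/
def projectionSegment (p : V →L[ℝ] E) (i : E →L[ℝ] V) (t : ℝ) : V →ₗ[ℝ] V :=
  (1 - t) • .id + t • i.toLinearMap ∘ₗ p.toLinearMap

theorem projectionSegment_apply (p : V →L[ℝ] E) (i : E →L[ℝ] V) (t : ℝ) (v : V) :
    projectionSegment p i t v = (1 - t) • v + t • i (p v) :=
  rfl

theorem apply_projectionSegment {p : V →L[ℝ] E} {i : E →L[ℝ] V} (h : LeftInverse p i) (t : ℝ)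
    (v : V) : p (projectionSegment p i t v) = p v := by
  rw [projectionSegment_apply, map_add, map_smul, map_smul, h, ← add_smul, sub_add_cancel, one_smul]

theorem projectionSegment_apply_section {p : V →L[ℝ] E} {i : E →L[ℝ] V} (h : LeftInverse p i)
    (t : ℝ) (e : E) : projectionSegment p i t (i e) = i e := by
  rw [projectionSegment_apply, h, ← add_smul, sub_add_cancel, one_smul]

theorem mem_projectiveDomain_projectionSegment {p : V →L[ℝ] E} {i : E →L[ℝ] V}
    (h : LeftInverse p i) (t : ℝ) {z : ℙ ℝ V} (hz : z ∈ projectiveDomain p.toLinearMap) :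
    z ∈ projectiveDomain (projectionSegment p i t) := by
  induction z with | h v hv =>
  refine fun hv0 : projectionSegment p i t v = 0 => hz ?_
  change p v = 0
  rw [← apply_projectionSegment h t, hv0, map_zero]

theorem projectiveMap_projectionSegment_mem {p : V →L[ℝ] E} {i : E →L[ℝ] V} (h : LeftInverse p i)
    (t : ℝ) {z : ℙ ℝ V} (hz : z ∈ projectiveDomain p.toLinearMap) :
    projectiveMap (projectionSegment p i t) ⟨z, mem_projectiveDomain_projectionSegment h t hz⟩ ∈
      projectiveDomain p.toLinearMap := by
  induction z with | h v hv =>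
  have hmk := projectiveMap_mk _ hv (mem_projectiveDomain_projectionSegment h t hz)
  exact hmk ▸ (apply_projectionSegment h t v).trans_ne hz

variable [ContinuousAdd V] [ContinuousSMul ℝ V]

/-- The homotopy from the identity of the domain of `projectionFromKer p` to the projection onto the
image of the section `i`, given at time `t` by `[v] ↦ [(1 - t) • v + t • i (p v)]`. -/
noncomputable def projectionHomotopy {p : V →L[ℝ] E} {i : E →L[ℝ] V} (h : LeftInverse p i) :
    (ContinuousMap.id (projectiveDomain p.toLinearMap)).HomotopyRel
      ((projectiveSection h).comp (projectionFromKer p)) (range (projectiveSection h)) where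
  toFun q := ⟨_, projectiveMap_projectionSegment_mem h q.1 q.2.2⟩
  continuous_toFun := by
    have hinterp : Continuous fun q : I × V => projectionSegment p i q.1 q.2 := by
      simp only [projectionSegment_apply]
      fun_prop
    have hincl : Continuous fun q : I × projectiveDomain p.toLinearMap =>
        (⟨(q.1, q.2.1), mem_projectiveDomain_projectionSegment h q.1 q.2.2⟩ :
          {q : I × ℙ ℝ V | q.2 ∈ projectiveDomain (projectionSegment p i q.1)}) :=
      Continuous.subtype_mk (by fun_prop) _
    have hmap := continuous_projectiveMap_family (L := fun t : I => projectionSegment p i t) hinterp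
    exact (hmap.comp hincl).subtype_mk fun q => projectiveMap_projectionSegment_mem h q.1 q.2.2
  map_zero_left := by
    rintro ⟨z, hz⟩
    induction z with | h v hv =>
    refine Subtype.ext ((projectiveMap_mk _ hv _).trans ?_)
    congr 1
    simp [projectionSegment_apply]
  map_one_left := by
    rintro ⟨z, hz⟩
    induction z with | h v hv =>
    refine Subtype.ext ((projectiveMap_mk _ hv _).trans ?_)
    have hproj := projectiveMap_mk p.toLinearMap hv hz
    refine Eq.trans ?_ (congrArg (Projectivization.map i.toLinearMap h.injective) hproj.symm)
    congr 1
    simp [projectionSegment_apply]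
  prop' := by
    rintro t _ ⟨z, rfl⟩
    induction z with | h e he =>
    refine Subtype.ext ((projectiveMap_mk _ _ _).trans ?_)
    congr 1
    exact projectionSegment_apply_section h t e

theorem nonempty_homotopyEquiv_compl_projectivization {N W : Submodule ℝ V}
    (h : W.IsTopCompl N) (e : E ≃L[ℝ] W) :
    Nonempty (((N.projectivization : Set (ℙ ℝ V))ᶜ : Set (ℙ ℝ V)) ≃ₕ ℙ ℝ E) := by
  have hinv : LeftInverse (e.symm.toContinuousLinearMap ∘L W.projectionOntoL N h)
      (W.subtypeL ∘L e.toContinuousLinearMap) := fun v => by simp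
  have hker : (e.symm.toContinuousLinearMap ∘L W.projectionOntoL N h).ker = N :=
    (LinearEquiv.ker_comp e.symm.toLinearEquiv _).trans (Submodule.ker_projectionOnto h.isCompl)
  rw [← projectiveDomain_of_ker_eq hker]
  exact nonempty_homotopyEquiv_of_leftInverse (leftInverse_projectionFromKer hinv)
    ⟨(projectionHomotopy hinv).toHomotopy⟩

theorem isStrongDeformationRetract_projectivization {N W : Submodule ℝ V}
    (h : W.IsTopCompl N) :
    IsStrongDeformationRetract (X := ((N.projectivization : Set (ℙ ℝ V))ᶜ : Set (ℙ ℝ V)))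
      (Subtype.val ⁻¹' (W.projectivization : Set (ℙ ℝ V))) := by
  have hinv : LeftInverse (W.projectionOntoL N h) W.subtypeL := fun v => by simp
  have hker : (W.projectionOntoL N h).ker = N := Submodule.ker_projectionOnto h.isCompl
  have hrange : W.subtypeL.range = W := W.range_subtype
  have hsection := range_projectiveSection hinv
  rw [hrange] at hsection
  rw [← projectiveDomain_of_ker_eq hker, ← hsection]
  exact isStrongDeformationRetract_range ⟨projectionHomotopy hinv⟩

end Homotopy

section ComplementOfPoint

theorem isCompl_submodule_of_notMem_projectivization {K V : Type*} [DivisionRing K]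
    [AddCommGroup V] [Module K V] {x : ℙ K V} {W : Submodule K V}
    (hW : finrank K V = finrank K W + 1) (hx : x ∉ W.projectivization) :
    IsCompl W x.submodule := by
  have : Module.Finite K V := finite_of_finrank_eq_succ hW
  rw [Submodule.isCompl_iff_disjoint _ _ (by rw [hW, x.finrank_submodule])]
  induction x with | h v hv =>
  exact Submodule.disjoint_span_singleton_of_notMem hx

variable {V E : Type*} [AddCommGroup V] [Module ℝ V] [TopologicalSpace V] [IsTopologicalAddGroup V]
  [ContinuousSMul ℝ V] [T2Space V] [AddCommGroup E] [Module ℝ E] [TopologicalSpace E]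
  [IsTopologicalAddGroup E] [ContinuousSMul ℝ E] [T2Space E] [FiniteDimensional ℝ E]

theorem complement_point_homotopyEquiv_projective_plane_general
    (hV : finrank ℝ V = finrank ℝ E + 1) (x : ℙ ℝ V) :
    Nonempty ({z : ℙ ℝ V // z ≠ x} ≃ₕ ℙ ℝ E) ∧
      ∀ W : Submodule ℝ V, finrank ℝ W = finrank ℝ E → x ∉ W.projectivization →
        IsStrongDeformationRetract {z : {z : ℙ ℝ V // z ≠ x} | z.1 ∈ W.projectivization} := by
  have : FiniteDimensional ℝ V := finite_of_finrank_eq_succ hV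
  have hcompl : (x.submodule.projectivization : Set (ℙ ℝ V))ᶜ = {z | z ≠ x} :=
    congrArg compl (coe_projectivization_submodule x)
  have isTopCompl {W : Submodule ℝ V} (hW : IsCompl W x.submodule) : W.IsTopCompl x.submodule :=
    Submodule.IsCompl.isTopCompl_of_finiteDimensional_quotient hW W.closed_of_finiteDimensional
  constructor
  · obtain ⟨W, hxW⟩ := x.submodule.exists_isCompl
    have hW := Submodule.finrank_add_eq_of_isCompl hxW
    rw [x.finrank_submodule, hV, add_comm, Nat.add_right_cancel_iff] at hW
    have := nonempty_homotopyEquiv_compl_projectivization (isTopCompl hxW.symm)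
      (ContinuousLinearEquiv.ofFinrankEq hW.symm)
    rwa [hcompl] at this
  · intro W hW hxW
    have := isStrongDeformationRetract_projectivization
      (isTopCompl (isCompl_submodule_of_notMem_projectivization (hW ▸ hV) hxW))
    rwa [hcompl] at this

end ComplementOfPoint

/-- The complement of a point `x` in `ℝP³` is homotopy equivalent to `ℝP²`; in fact any
projective plane `H ⊂ ℝP³` not containing `x` is a (strong) deformation retract of
`ℝP³ \ {x}`. -/
theorem complement_point_homotopyEquiv_projective_plane
    (x : Projectivization ℝ (EuclideanSpace ℝ (Fin 4))) :
    Nonempty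
      (ContinuousMap.HomotopyEquiv
        {z : Projectivization ℝ (EuclideanSpace ℝ (Fin 4)) // z ≠ x}
        (Projectivization ℝ (EuclideanSpace ℝ (Fin 3)))) ∧
    ∀ (W : Submodule ℝ (EuclideanSpace ℝ (Fin 4))), Module.finrank ℝ W = 3 →
      ∀ H : Set (Projectivization ℝ (EuclideanSpace ℝ (Fin 4))),
        H = {z | ∃ (v : EuclideanSpace ℝ (Fin 4)) (hv : v ≠ 0),
          v ∈ W ∧ Projectivization.mk ℝ v hv = z} →
        x ∉ H →
        ∃ r : C({z : Projectivization ℝ (EuclideanSpace ℝ (Fin 4)) // z ≠ x},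
                {z : Projectivization ℝ (EuclideanSpace ℝ (Fin 4)) // z ≠ x}),
          (∀ z, (r z : Projectivization ℝ (EuclideanSpace ℝ (Fin 4))) ∈ H) ∧
          (∀ z : {z : Projectivization ℝ (EuclideanSpace ℝ (Fin 4)) // z ≠ x},
            (z : Projectivization ℝ (EuclideanSpace ℝ (Fin 4))) ∈ H → r z = z) ∧
          ContinuousMap.HomotopicRel (ContinuousMap.id _) r
            {z | (z : Projectivization ℝ (EuclideanSpace ℝ (Fin 4))) ∈ H} := by
  have h := complement_point_homotopyEquiv_projective_plane_general
    (E := EuclideanSpace ℝ (Fin 3)) (by simp) x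
  refine ⟨h.1, fun W hW H hH hxH => ?_⟩
  obtain rfl := hH.trans (coe_projectivization_eq_setOf_mk W).symm
  exact h.2 W (by simpa using hW) hxH
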